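/- Let k be a field, let X be an integral scheme of finite type and proper over k with function field K, and let A be a valuation subring of K containing k (so that the residue field κ_A is a field extension of k). Then the Krull dimension of the center of A on X, as a topological space, is at most the transcendence degree of κ_A over k. -/

import Mathlib

open AlgebraicGeometry CategoryTheory

instance {X : Scheme} [Nonempty X] : Nonempty (⊤ : X.Opens) :=
  ⟨⟨Nonempty.some inferInstance, trivial⟩⟩

/-- The canonical ring homomorphism from the base ring `k` to the function field of an
integral scheme `X` equipped with a structure morphism `f : X ⟶ Spec k`. -/
noncomputable def structureMapToFunctionField (k : Type*) [CommRing k] (X : Scheme)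
    [IsIntegral X] (f : X ⟶ Spec (CommRingCat.of k)) :
    CommRingCat.of k ⟶ X.functionField :=
  (Scheme.ΓSpecIso (CommRingCat.of k)).inv ≫ f.appTop ≫ (X.germToFunctionField ⊤)

/-- The *center* of a valuation subring `A` of the function field of an integral scheme
`X`. -/
def valuationCenter (X : Scheme) [IsIntegral X]
    (A : ValuationSubring X.functionField) : Set X :=
  {x : X | ∀ g : X.presheaf.stalk x,
    algebraMap (X.presheaf.stalk x) X.functionField g ∈ A}

/-!
Dimension is local, so it is enough to bound the part of the center in an affine open `U` that
meets it. There all sections over `U` lie in `A`, which gives a `k`-algebra homomorphism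
`φ : Γ(X, U) → κ_A`. A section whose germ at a point of the center is invertible is a unit of `A`,
so the center inside `U` is contained in the zero locus of `ker φ`. The dimension of that locus is
the Krull dimension of the `k`-subalgebra `Γ(X, U) ⧸ ker φ` of `κ_A`, which is at most its
transcendence degree: a finite chain of primes stays strict when contracted to a suitable finitely
generated subalgebra, where Noether normalization applies.
-/

universe u

section KrullDimension

open Topology TopologicalSpace

theorem topologicalKrullDim_le_of_forall_mem_exists_isOpen {T : Type*} [TopologicalSpace T]
    {Z : Set T} {d : WithBot ℕ∞}
    (h : ∀ x ∈ Z, ∃ U, IsOpen U ∧ x ∈ U ∧ topologicalKrullDim ↥(Z ∩ U) ≤ d) :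
    topologicalKrullDim Z ≤ d := by
  refine iSup_le fun l ↦ ?_
  obtain ⟨x, hx⟩ := l.head.isIrreducible.nonempty
  obtain ⟨U, hU, hxU, hd⟩ := h x x.2
  let ι : ↥(Z ∩ U) → Z := Set.inclusion Set.inter_subset_left
  have hι : IsOpenEmbedding ι :=
    .inclusion _ <| by simpa using hU.preimage continuous_subtype_val
  -- Every member of the chain contains `x`, hence meets `U`, so the chain restricts to `Z ∩ U`.
  let l' : LTSeries {V : IrreducibleCloseds Z | (ι ⁻¹' V).Nonempty} :=
    ⟨l.length, fun i ↦ ⟨l i, ⟨x, x.2, hxU⟩, l.head_le i hx⟩, l.step⟩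
  calc (l.length : WithBot ℕ∞)
    _ ≤ Order.krullDim _ := Order.LTSeries.length_le_krullDim l'
    _ = topologicalKrullDim ↥(Z ∩ U) :=
      (Order.krullDim_eq_of_orderIso (IrreducibleCloseds.orderIsoOfIsOpenEmbedding _ hι)).symm
    _ ≤ d := hd

theorem ringKrullDim_le_of_isIntegral (R S : Type*) [CommRing R] [CommRing S] [Algebra R S]
    [Algebra.IsIntegral R S] : ringKrullDim S ≤ ringKrullDim R :=
  Order.krullDim_le_of_strictMono (PrimeSpectrum.comap (algebraMap R S)) fun P Q hPQ ↦
    Ideal.IsIntegral.comap_lt_comap (I := P.asIdeal) (J := Q.asIdeal) hPQ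

variable (k : Type*) [Field k] (B : Type*) [CommRing B] [Algebra k B]

theorem ringKrullDim_le_trdeg_of_finiteType [Algebra.FiniteType k B] :
    ringKrullDim B ≤ (Cardinal.toENat (Algebra.trdeg k B) : WithBot ℕ∞) := by
  cases subsingleton_or_nontrivial B
  · simp [ringKrullDim_eq_bot_of_subsingleton]
  obtain ⟨m, g, hg, hint⟩ := exists_integral_inj_algHom_of_fg k B
  have hdim : ringKrullDim B ≤ m := by
    algebraize [g.toRingHom]
    simpa using ringKrullDim_le_of_isIntegral (MvPolynomial (Fin m) k) B
  have htrdeg : (m : ℕ∞) ≤ Cardinal.toENat (Algebra.trdeg k B) := by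
    simpa using lift_trdeg_le_of_injective g hg
  exact hdim.trans (mod_cast htrdeg)

theorem ringKrullDim_le_trdeg :
    ringKrullDim B ≤ (Cardinal.toENat (Algebra.trdeg k B) : WithBot ℕ∞) := by
  refine iSup_le fun l ↦ ?_
  -- The `x i` separate consecutive primes, so the chain stays strict on contraction to `k[x]`.
  choose x hx hx' using fun i ↦ Set.exists_of_ssubset (l.step i)
  let C := Algebra.adjoin k (Set.range x)
  let contract : PrimeSpectrum B → PrimeSpectrum C := PrimeSpectrum.comap C.val.toRingHom
  have hstep (i : Fin l.length) : contract (l i.castSucc) < contract (l i.succ) :=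
    (SetLike.lt_iff_le_and_exists (p := (contract _).asIdeal)).mpr
      ⟨Ideal.comap_mono (l.step i).le, ⟨x i, Algebra.subset_adjoin ⟨i, rfl⟩⟩, hx i, hx' i⟩
  have : Algebra.FiniteType k C :=
    C.fg_iff_finiteType.mp (Subalgebra.fg_def.mpr ⟨_, Set.finite_range x, rfl⟩)
  calc (l.length : WithBot ℕ∞)
    _ ≤ ringKrullDim C :=
      Order.LTSeries.length_le_krullDim ⟨l.length, fun i ↦ contract (l i), hstep⟩
    _ ≤ (Cardinal.toENat (Algebra.trdeg k C) : WithBot ℕ∞) :=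
      ringKrullDim_le_trdeg_of_finiteType k C
    _ ≤ (Cardinal.toENat (Algebra.trdeg k B) : WithBot ℕ∞) :=
      WithBot.coe_le_coe.mpr <| Cardinal.toENat.monotone' <|
        trdeg_le_of_injective C.val Subtype.val_injective

variable {k B}

theorem ringKrullDim_quotient_ker_le_trdeg {S : Type*} [CommRing S] [Algebra k S]
    (φ : B →ₐ[k] S) :
    ringKrullDim (B ⧸ RingHom.ker φ) ≤ (Cardinal.toENat (Algebra.trdeg k S) : WithBot ℕ∞) := by
  refine (ringKrullDim_le_trdeg k _).trans (WithBot.coe_le_coe.mpr ?_)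
  simpa using Cardinal.toENat.monotone' <|
    lift_trdeg_le_of_injective (Ideal.kerLiftAlg φ) (Ideal.kerLiftAlg_injective φ)

end KrullDimension

section Scheme

variable {X : Scheme.{u}} {U : X.Opens}

/-- The canonical ring homomorphism from the base ring `k` to the sections of `X` over `U`,
through which `structureMapToFunctionField` factors. -/
noncomputable def structureMapToSections {k : Type u} [CommRing k]
    (f : X ⟶ Spec (CommRingCat.of k)) (U : X.Opens) : CommRingCat.of k ⟶ Γ(X, U) :=
  (Scheme.ΓSpecIso (CommRingCat.of k)).inv ≫ f.appTop ≫ X.presheaf.map (homOfLE le_top).op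

theorem topologicalKrullDim_zeroLocus_inter_of_isAffineOpen (hU : IsAffineOpen U)
    (I : Ideal Γ(X, U)) :
    topologicalKrullDim ↥(X.zeroLocus (I : Set Γ(X, U)) ∩ U) = ringKrullDim (Γ(X, U) ⧸ I) := by
  let j : PrimeSpectrum (Γ(X, U) ⧸ I) → X :=
    hU.fromSpec ∘ PrimeSpectrum.comap (Ideal.Quotient.mk I)
  have hj : Topology.IsEmbedding j :=
    hU.fromSpec.isOpenEmbedding.isEmbedding.comp
      (PrimeSpectrum.isClosedEmbedding_comap_of_surjective _ _
        Ideal.Quotient.mk_surjective).isEmbedding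
  have hrange_comap : Set.range (PrimeSpectrum.comap (Ideal.Quotient.mk I)) =
      PrimeSpectrum.zeroLocus I := by
    rw [range_comap_of_surjective _ _ Ideal.Quotient.mk_surjective, Ideal.mk_ker]
  have hrange : Set.range j = X.zeroLocus (I : Set Γ(X, U)) ∩ U :=
    calc Set.range j
      _ = hU.fromSpec '' Set.range (PrimeSpectrum.comap (Ideal.Quotient.mk I)) :=
        Set.range_comp _ _
      _ = hU.fromSpec '' PrimeSpectrum.zeroLocus I := congrArg _ hrange_comap
      _ = X.zeroLocus (I : Set Γ(X, U)) ∩ U := hU.fromSpec_image_zeroLocus _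
  rw [← hrange, ← hj.toHomeomorph.isHomeomorph.topologicalKrullDim_eq,
    PrimeSpectrum.topologicalKrullDim_eq_ringKrullDim]

variable [IsIntegral X] {A : ValuationSubring X.functionField}

theorem germToFunctionField_mem_of_mem_valuationCenter [Nonempty U] {x : X} (hxU : x ∈ U)
    (hx : x ∈ valuationCenter X A) (b : Γ(X, U)) : X.germToFunctionField U b ∈ A := by
  simpa using hx (X.presheaf.germ U x hxU b)

/-- Evaluation of sections at the closed point of `Spec A`, as the composite
`Γ(X, U) → A → κ_A`. It exists once all sections over `U` lie in `A`, as they do when `U` meets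
the center of `A`. -/
noncomputable def sectionsToResidueField [Nonempty U]
    (hUA : ∀ b : Γ(X, U), X.germToFunctionField U b ∈ A) :
    Γ(X, U) →+* IsLocalRing.ResidueField A :=
  (IsLocalRing.residue A).comp ((X.germToFunctionField U).hom.codRestrict A.toSubring hUA)

theorem valuationCenter_inter_subset_zeroLocus [Nonempty U]
    (hUA : ∀ b : Γ(X, U), X.germToFunctionField U b ∈ A) :
    valuationCenter X A ∩ U ⊆
      X.zeroLocus (RingHom.ker (sectionsToResidueField hUA) : Set Γ(X, U)) := by
  rintro x ⟨hx, hxU⟩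
  rw [Scheme.mem_zeroLocus_iff]
  intro b hb hxb
  let toA : X.presheaf.stalk x →+* A :=
    (algebraMap (X.presheaf.stalk x) X.functionField).codRestrict A.toSubring hx
  have hunit : IsUnit (toA (X.presheaf.germ U x hxU b)) :=
    ((X.mem_basicOpen b x hxU).mp hxb).map toA
  have heq : toA (X.presheaf.germ U x hxU b) = ⟨X.germToFunctionField U b, hUA b⟩ :=
    Subtype.ext (Scheme.algebraMap_germ_eq_germToFunctionField X hxU b)
  exact (hunit.map (IsLocalRing.residue A)).ne_zero (heq ▸ hb)

theorem topologicalKrullDim_valuationCenter_inter_le (hU : IsAffineOpen U) [Nonempty U]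
    (hUA : ∀ b : Γ(X, U), X.germToFunctionField U b ∈ A) :
    topologicalKrullDim ↥(valuationCenter X A ∩ U) ≤
      ringKrullDim (Γ(X, U) ⧸ RingHom.ker (sectionsToResidueField hUA)) := by
  rw [← topologicalKrullDim_zeroLocus_inter_of_isAffineOpen hU]
  have hsub := Set.subset_inter (valuationCenter_inter_subset_zeroLocus hUA) Set.inter_subset_right
  exact (Topology.IsEmbedding.inclusion hsub).isInducing.topologicalKrullDim_le

theorem structureMapToSections_germToFunctionField {k : Type u} [CommRing k]
    (f : X ⟶ Spec (CommRingCat.of k)) (U : X.Opens) [Nonempty U] :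
    structureMapToSections f U ≫ X.germToFunctionField U =
      structureMapToFunctionField k X f := by
  simp only [structureMapToSections, structureMapToFunctionField, Category.assoc]
  congr 2
  exact X.presheaf.germ_res (homOfLE le_top) _ _

end Scheme

theorem dim_center_le_trdeg_general (k : Type u) [Field k] (X : Scheme.{u}) [IsIntegral X]
    (f : X ⟶ Spec (CommRingCat.of k)) (A : ValuationSubring X.functionField)
    (hk : ∀ a : k, structureMapToFunctionField k X f a ∈ A)
    [Algebra k (IsLocalRing.ResidueField A)]
    (halg : ∀ a : k, algebraMap k (IsLocalRing.ResidueField A) a =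
      IsLocalRing.residue A ⟨structureMapToFunctionField k X f a, hk a⟩) :
    topologicalKrullDim (valuationCenter X A) ≤
      (Cardinal.toENat (Algebra.trdeg k (IsLocalRing.ResidueField A)) : WithBot ℕ∞) := by
  refine topologicalKrullDim_le_of_forall_mem_exists_isOpen fun x hx ↦ ?_
  obtain ⟨U, hU, hxU, -⟩ := exists_isAffineOpen_mem_and_subset (TopologicalSpace.Opens.mem_top x)
  have : Nonempty U := ⟨⟨x, hxU⟩⟩
  have hUA := germToFunctionField_mem_of_mem_valuationCenter hxU hx
  let _ : Algebra k Γ(X, U) := (structureMapToSections f U).hom.toAlgebra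
  let φ : Γ(X, U) →ₐ[k] IsLocalRing.ResidueField A :=
    { sectionsToResidueField hUA with
      commutes' a := by
        rw [halg]
        exact congrArg (IsLocalRing.residue A) <| Subtype.ext
          congr($(structureMapToSections_germToFunctionField f U) a) }
  exact ⟨U, U.isOpen, hxU, (topologicalKrullDim_valuationCenter_inter_le hU hUA).trans
    (ringKrullDim_quotient_ker_le_trdeg φ)⟩

/-- Let `k` be a field, `X` an integral scheme of finite type and proper over `k` with
function field `K`, and `A` a valuation subring of `K` containing (the image of) `k`, so
that the residue field `κ_A` is a field extension of `k`.  Then the Krull dimension of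
the center of `A` on `X`, as a topological space, is at most the transcendence degree of
`κ_A` over `k` (expressed here as the cardinality of a transcendence basis `s` of `κ_A`
over `k`). -/
theorem dim_center_le_trdeg
    (k : Type*) [Field k] (X : Scheme) [IsIntegral X]
    (f : X ⟶ Spec (CommRingCat.of k)) [IsProper f] [QuasiCompact f]
    (A : ValuationSubring X.functionField)
    (hk : ∀ a : k, structureMapToFunctionField k X f a ∈ A)
    [Algebra k (IsLocalRing.ResidueField A)]
    (halg : ∀ a : k, algebraMap k (IsLocalRing.ResidueField A) a =
      IsLocalRing.residue A ⟨structureMapToFunctionField k X f a, hk a⟩)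
    (s : Set (IsLocalRing.ResidueField A))
    (hs : IsTranscendenceBasis k ((↑) : s → IsLocalRing.ResidueField A)) :
    ∀ n : ℕ, (n : WithBot ℕ∞) ≤ topologicalKrullDim (valuationCenter X A) →
      (n : Cardinal) ≤ Cardinal.mk s := by
  intro n hn
  rw [hs.cardinalMk_eq_trdeg, ← Cardinal.natCast_le_toENat]
  exact_mod_cast hn.trans (dim_center_le_trdeg_general k X f A hk halg)
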